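/- arXiv:2410.20209 — 5 statements merged into one kernel-verified Lean document; each statement's English description precedes it below -/
import Mathlib

section
/- Let d ≥ 3 and ℓ ≥ 1 be integers. For all x ∈ [−1,1], the d-dimensional Legendre polynomials satisfy P_{2ℓ}(x) − P_{2(ℓ+1)}(x) ≤ ((λ_{2(ℓ+1)} − λ_{2ℓ})/λ_2) · (1 − P_2(x)), where λ_k = k(k + d − 2). -/
open MeasureTheory

/-- The constant ω_p = 2π^((p+1)/2) / Γ((p+1)/2). -/
noncomputable def omegaConst (p : ℝ) : ℝ :=
  2 * Real.pi ^ ((p + 1) / 2) / Real.Gamma ((p + 1) / 2)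

/-- The d-dimensional Legendre polynomial of order n, normalized so that P_n(1) = 1,
given by the integral representation
P_n(x) = (ω_{d−3}/ω_{d−2}) ∫_{−1}^{1} Re((x + i s √(1−x²))^n) (1−s²)^((d−4)/2) ds. -/
noncomputable def legendreP (d : ℕ) (n : ℕ) (x : ℝ) : ℝ :=
  (omegaConst ((d : ℝ) - 3) / omegaConst ((d : ℝ) - 2)) *
    ∫ s in (-1 : ℝ)..1,
      (((x : ℂ) + Complex.I * (s : ℂ) * (Real.sqrt (1 - x ^ 2) : ℂ)) ^ n).re *
        (1 - s ^ 2) ^ (((d : ℝ) - 4) / 2)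

/-- The eigenvalue λ_k = k(k + d − 2) of the (minus) spherical Laplacian on S^{d−1}. -/
noncomputable def lambdaEig (d k : ℕ) : ℝ := (k : ℝ) * ((k : ℝ) + (d : ℝ) - 2)

theorem aux_wint (a : ℝ) (ha : -1 < a) :
    ∫ s in (-1 : ℝ)..1, (1 - s ^ 2) ^ a
      = √Real.pi * Real.Gamma (a + 1) / Real.Gamma (a + 3 / 2) := by
  have h1 : ∫ t in (0 : ℝ)..1, t ^ a * (1 - t) ^ a
      = Real.Gamma (a + 1) * Real.Gamma (a + 1) / Real.Gamma (2 * (a + 1)) := by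
    have hb := ProbabilityTheory.beta_eq_betaIntegralReal (a + 1) (a + 1)
      (by linarith) (by linarith)
    have e : Complex.betaIntegral ((a + 1 : ℝ) : ℂ) ((a + 1 : ℝ) : ℂ)
        = ((∫ t in (0 : ℝ)..1, t ^ a * (1 - t) ^ a : ℝ) : ℂ) := by
      rw [Complex.betaIntegral, ← intervalIntegral.integral_ofReal]
      apply intervalIntegral.integral_congr
      intro t ht
      rw [Set.uIcc_of_le zero_le_one] at ht
      simp only [Complex.ofReal_mul]
      rw [Complex.ofReal_cpow ht.1, Complex.ofReal_cpow (by linarith [ht.2])]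
      push_cast
      simp
    rw [e, Complex.ofReal_re, ProbabilityTheory.beta] at hb
    rw [← hb, two_mul]
  have h2 := intervalIntegral.integral_comp_mul_sub (a := 0) (b := 1)
    (fun s : ℝ => (1 - s ^ 2) ^ a) (two_ne_zero : (2 : ℝ) ≠ 0) 1
  have h3 : ∫ t in (0 : ℝ)..1, (1 - (2 * t - 1) ^ 2) ^ a
      = 4 ^ a * ∫ t in (0 : ℝ)..1, t ^ a * (1 - t) ^ a := by
    rw [← intervalIntegral.integral_const_mul]
    apply intervalIntegral.integral_congr
    intro t ht
    rw [Set.uIcc_of_le zero_le_one] at ht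
    have h1t : 0 ≤ 1 - t := by linarith [ht.2]
    simp only
    rw [← Real.mul_rpow ht.1 h1t, ← Real.mul_rpow (by norm_num) (mul_nonneg ht.1 h1t)]
    congr 1
    ring
  rw [h3, h1] at h2
  norm_num at h2
  have h4 : (∫ s in (-1 : ℝ)..1, (1 - s ^ 2) ^ a) = 2 * (4 ^ a *
      (Real.Gamma (a + 1) * Real.Gamma (a + 1) / Real.Gamma (2 * (a + 1)))) := by
    linarith
  have h5 := Real.Gamma_mul_Gamma_add_half (a + 1)
  rw [show a + 1 + 1 / 2 = a + 3 / 2 by ring] at h5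
  have g1 : 0 < Real.Gamma (a + 1) := Real.Gamma_pos_of_pos (by linarith)
  have g2 : 0 < Real.Gamma (a + 3 / 2) := Real.Gamma_pos_of_pos (by linarith)
  have g3 : 0 < Real.Gamma (2 * (a + 1)) := Real.Gamma_pos_of_pos (by linarith)
  have h6 : (2 : ℝ) * 4 ^ a * 2 ^ (1 - 2 * (a + 1)) = 1 := by
    rw [show (4 : ℝ) = 2 ^ (2 : ℝ) by norm_num, ← Real.rpow_mul (by norm_num)]
    nth_rewrite 1 [← Real.rpow_one 2]
    rw [← Real.rpow_add (by norm_num), ← Real.rpow_add (by norm_num)]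
    ring_nf
    simp
  rw [h4, eq_div_iff g2.ne']
  generalize Real.Gamma (a + 3 / 2) = G at *
  field_simp
  linear_combination (2 * 4 ^ a) * h5 +
    Real.Gamma (2 * (a + 1)) * √Real.pi * h6

theorem aux_norm (d : ℕ) (hd : 3 ≤ d) :
    0 < omegaConst ((d : ℝ) - 3) / omegaConst ((d : ℝ) - 2) ∧
    omegaConst ((d : ℝ) - 3) / omegaConst ((d : ℝ) - 2) *
      ∫ s in (-1 : ℝ)..1, (1 - s ^ 2) ^ (((d : ℝ) - 4) / 2) = 1 := by
  have hd' : (3 : ℝ) ≤ d := by exact_mod_cast hd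
  have g1 : 0 < Real.Gamma (((d : ℝ) - 2) / 2) := Real.Gamma_pos_of_pos (by linarith)
  have g2 : 0 < Real.Gamma (((d : ℝ) - 1) / 2) := Real.Gamma_pos_of_pos (by linarith)
  have p1 : 0 < Real.pi ^ (((d : ℝ) - 2) / 2) := Real.rpow_pos_of_pos Real.pi_pos _
  have p2 : Real.pi ^ (((d : ℝ) - 1) / 2) = Real.pi ^ (((d : ℝ) - 2) / 2) * √Real.pi := by
    rw [Real.sqrt_eq_rpow, ← Real.rpow_add Real.pi_pos]
    congr 1
    ring
  have p3 : 0 < √Real.pi := Real.sqrt_pos.2 Real.pi_pos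
  rw [aux_wint _ (by linarith), omegaConst, omegaConst,
    show ((d : ℝ) - 3 + 1) / 2 = ((d : ℝ) - 2) / 2 by ring,
    show ((d : ℝ) - 2 + 1) / 2 = ((d : ℝ) - 1) / 2 by ring,
    show ((d : ℝ) - 4) / 2 + 1 = ((d : ℝ) - 2) / 2 by ring,
    show ((d : ℝ) - 4) / 2 + 3 / 2 = ((d : ℝ) - 1) / 2 by ring, p2]
  constructor
  · positivity
  · field_simp

theorem aux_intble (a : ℝ) (ha : -1 < a) :
    IntervalIntegrable (fun s : ℝ => (1 - s ^ 2) ^ a) volume (-1) 1 := by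
  by_contra h
  have h1 := intervalIntegral.integral_undef h
  rw [aux_wint a ha] at h1
  have g1 : 0 < Real.Gamma (a + 1) := Real.Gamma_pos_of_pos (by linarith)
  have g2 : 0 < Real.Gamma (a + 3 / 2) := Real.Gamma_pos_of_pos (by linarith)
  have p3 : 0 < √Real.pi := Real.sqrt_pos.2 Real.pi_pos
  have : 0 < √Real.pi * Real.Gamma (a + 1) / Real.Gamma (a + 3 / 2) := by positivity
  linarith

/-- the point `x + i s r` -/
noncomputable def zpt (x r s : ℝ) : ℂ := (x : ℂ) + Complex.I * (s : ℂ) * (r : ℂ)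

theorem aux_cont (x r : ℝ) (n : ℕ) : Continuous (fun s : ℝ => (zpt x r s ^ n).re) := by
  unfold zpt
  fun_prop

theorem aux_key (a : ℝ) (ha : -1 < a) (x r : ℝ) (hr : r ^ 2 = 1 - x ^ 2) (n : ℕ) :
    (2 * n + 2 * a + 4) * ((1 - x ^ 2) * ∫ s in (-1 : ℝ)..1,
        (zpt x r s ^ n).re * (1 - s ^ 2) * (1 - s ^ 2) ^ a)
      = 2 * (a + 1) * ((∫ s in (-1 : ℝ)..1, (zpt x r s ^ n).re * (1 - s ^ 2) ^ a)
        - ∫ s in (-1 : ℝ)..1, (zpt x r s ^ (n + 2)).re * (1 - s ^ 2) ^ a) := by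
  have hI := aux_intble a ha
  have c0 := aux_cont x r n
  have c2 := aux_cont x r (n + 2)
  have i1 : IntervalIntegrable (fun s : ℝ => (zpt x r s ^ n).re * (1 - s ^ 2) * (1 - s ^ 2) ^ a)
      volume (-1) 1 := hI.continuousOn_mul (by fun_prop)
  have i2 : IntervalIntegrable (fun s : ℝ => (zpt x r s ^ n).re * (1 - s ^ 2) ^ a)
      volume (-1) 1 := hI.continuousOn_mul c0.continuousOn
  have i3 : IntervalIntegrable (fun s : ℝ => (zpt x r s ^ (n + 2)).re * (1 - s ^ 2) ^ a)
      volume (-1) 1 := hI.continuousOn_mul c2.continuousOn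
  have i4 := ((i1.const_mul (1 - x ^ 2)).const_mul (2 * n + 2 * a + 4)).sub
    ((i2.sub i3).const_mul (2 * (a + 1)))
  have hF := intervalIntegral.integral_eq_sub_of_hasDerivAt_of_le
    (f := fun s : ℝ => (-2 * Complex.I * r * zpt x r s ^ (n + 1)).re * (1 - s ^ 2) ^ (a + 1))
    (by norm_num : (-1 : ℝ) ≤ 1) ?_ ?_ i4
  · simp only [one_pow, even_two, Even.neg_pow, sub_self,
      Real.zero_rpow (by linarith : a + 1 ≠ 0), mul_zero] at hF
    rw [intervalIntegral.integral_sub, intervalIntegral.integral_const_mul,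
      intervalIntegral.integral_const_mul, intervalIntegral.integral_const_mul,
      intervalIntegral.integral_sub i2 i3] at hF
    · linarith
    · exact (i1.const_mul (1 - x ^ 2)).const_mul (2 * n + 2 * a + 4)
    · exact (i2.sub i3).const_mul (2 * (a + 1))
  · apply Continuous.continuousOn
    apply Continuous.mul
    · unfold zpt; fun_prop
    · exact Continuous.rpow_const (by fun_prop) (fun s => Or.inr (by linarith))
  · intro s hs
    have hpos : 0 < 1 - s ^ 2 := by nlinarith [hs.1, hs.2]
    have hz : HasDerivAt (fun s : ℝ => zpt x r s) (Complex.I * r) s := by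
      have := (((Complex.ofRealCLM.hasDerivAt (x := s)).const_mul Complex.I).mul_const
        (r : ℂ)).const_add (x : ℂ)
      simpa [zpt] using this
    have hU0 := (hz.pow (n + 1)).const_mul (-2 * Complex.I * (r : ℂ))
    have hU := Complex.reCLM.hasFDerivAt.comp_hasDerivAt s hU0
    have hV0 : HasDerivAt (fun s : ℝ => 1 - s ^ 2) (-(2 * s)) s := by
      simpa using (hasDerivAt_pow 2 s).const_sub 1
    have hV := hV0.rpow_const (p := a + 1) (Or.inl hpos.ne')
    have hUV := hU.mul hV
    convert! hUV using 1
    simp only [Complex.reCLM_apply, Nat.add_sub_cancel, add_sub_cancel_right, Function.comp, Pi.pow_apply]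
    rw [Real.rpow_add hpos, Real.rpow_one, pow_succ _ (n + 1), pow_succ _ n]
    generalize zpt x r s ^ n = p
    generalize (1 - s ^ 2) ^ a = w
    simp [zpt]
    have : r * r = 1 - x ^ 2 := by rw [← hr]; ring
    linear_combination (2 * p.re * w * s ^ 2 * (a + 1)
      - 2 * (n + 1) * p.re * w * (1 - s ^ 2)) * hr

theorem aux_bound (a : ℝ) (ha : -1 < a) (x r : ℝ) (hr : r ^ 2 = 1 - x ^ 2) (n : ℕ) :
    (∫ s in (-1 : ℝ)..1, (zpt x r s ^ n).re * (1 - s ^ 2) * (1 - s ^ 2) ^ a)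
      ≤ ∫ s in (-1 : ℝ)..1, (zpt x r s ^ 0).re * (1 - s ^ 2) * (1 - s ^ 2) ^ a := by
  have hI := aux_intble a ha
  have c0 := aux_cont x r n
  have c2 := aux_cont x r 0
  apply intervalIntegral.integral_mono_on (by norm_num)
  · exact hI.continuousOn_mul (by fun_prop)
  · exact hI.continuousOn_mul (by fun_prop)
  · intro s hs
    have hpos : 0 ≤ 1 - s ^ 2 := by nlinarith [hs.1, hs.2]
    have hz : ‖zpt x r s‖ ≤ 1 := by
      rw [← sq_le_one_iff₀ (norm_nonneg _), ← Complex.normSq_eq_norm_sq, Complex.normSq_apply]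
      simp [zpt]
      nlinarith [mul_nonneg (sq_nonneg r) hpos]
    have h1 : (zpt x r s ^ n).re ≤ 1 :=
      (Complex.re_le_norm _).trans (by rw [norm_pow]; exact pow_le_one₀ (norm_nonneg _) hz)
    have : (zpt x r s ^ 0).re = 1 := by simp
    rw [this]
    gcongr

theorem legendre_spectral_gap_inequality
    (d ℓ : ℕ) (hd : 3 ≤ d) (hℓ : 1 ≤ ℓ) (x : ℝ) (hx : x ∈ Set.Icc (-1 : ℝ) 1) :
    legendreP d (2 * ℓ) x - legendreP d (2 * (ℓ + 1)) x ≤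
      ((lambdaEig d (2 * (ℓ + 1)) - lambdaEig d (2 * ℓ)) / lambdaEig d 2) *
        (1 - legendreP d 2 x) := by
  have hd' : (3 : ℝ) ≤ d := by exact_mod_cast hd
  obtain ⟨hN, hN1⟩ := aux_norm d hd
  have ha : -1 < ((d : ℝ) - 4) / 2 := by linarith
  have hx2 : 0 ≤ 1 - x ^ 2 := by nlinarith [hx.1, hx.2]
  have hr : √(1 - x ^ 2) ^ 2 = 1 - x ^ 2 := Real.sq_sqrt hx2
  have k1 := aux_key _ ha x _ hr (2 * ℓ)
  have k0 := aux_key _ ha x _ hr 0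
  have hb := aux_bound _ ha x _ hr (2 * ℓ)
  have e0 : (∫ s in (-1 : ℝ)..1, (zpt x (√(1 - x ^ 2)) s ^ 0).re * (1 - s ^ 2) ^ (((d : ℝ) - 4) / 2))
      = ∫ s in (-1 : ℝ)..1, (1 - s ^ 2) ^ (((d : ℝ) - 4) / 2) := by simp
  rw [e0] at k0
  have hP : ∀ n, legendreP d n x = (omegaConst ((d : ℝ) - 3) / omegaConst ((d : ℝ) - 2)) *
    ∫ s in (-1 : ℝ)..1, (zpt x (√(1 - x ^ 2)) s ^ n).re * (1 - s ^ 2) ^ (((d : ℝ) - 4) / 2) :=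
    fun n => rfl
  have hc : (lambdaEig d (2 * (ℓ + 1)) - lambdaEig d (2 * ℓ)) / lambdaEig d 2
      = (4 * ℓ + d) / d := by
    unfold lambdaEig
    push_cast
    rw [div_eq_div_iff (by nlinarith) (by linarith)]
    ring
  rw [hc, hP, hP, hP, show 2 * (ℓ + 1) = 2 * ℓ + 2 by ring]
  generalize omegaConst ((d : ℝ) - 3) / omegaConst ((d : ℝ) - 2) = N at *
  rw [zero_add] at k0
  set I0 := ∫ s in (-1 : ℝ)..1, (1 - s ^ 2) ^ (((d : ℝ) - 4) / 2)
  set J0 := ∫ s in (-1 : ℝ)..1, (zpt x (√(1 - x ^ 2)) s ^ 0).re * (1 - s ^ 2) *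
    (1 - s ^ 2) ^ (((d : ℝ) - 4) / 2)
  set J := ∫ s in (-1 : ℝ)..1, (zpt x (√(1 - x ^ 2)) s ^ (2 * ℓ)).re * (1 - s ^ 2) *
    (1 - s ^ 2) ^ (((d : ℝ) - 4) / 2)
  rw [show ∀ y : ℝ, (1 : ℝ) - N * y = N * (I0 - y) from fun y => by rw [mul_sub, hN1],
    ← mul_sub, mul_left_comm]
  refine mul_le_mul_of_nonneg_left ?_ hN.le
  have hd2 : (0 : ℝ) < d - 2 := by linarith
  push_cast at k1 k0
  refine le_of_mul_le_mul_left ?_ hd2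
  have hm : (4 * ℓ + d) * ((1 - x ^ 2) * J) ≤ (4 * ℓ + d) * ((1 - x ^ 2) * J0) := by gcongr
  have hdne : (d : ℝ) ≠ 0 := by linarith
  have : ((d : ℝ) - 2) * ((4 * ℓ + d) / d * (I0 - ∫ s in (-1 : ℝ)..1,
      (zpt x (√(1 - x ^ 2)) s ^ 2).re * (1 - s ^ 2) ^ (((d : ℝ) - 4) / 2)))
      = (4 * ℓ + d) * ((1 - x ^ 2) * J0) := by
    field_simp
    linear_combination -k0
  rw [this]
  linarith
end

section
/- Let d ≥ 3 and ℓ ≥ 1 be integers. For all x ∈ [−1,1], the d-dimensional Legendre polynomials satisfy P_{2ℓ}(x) − P_{2ℓ+2}(x) ≤ ((4ℓ + d)/(d − 1)) · (1 − x²). -/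
open MeasureTheory

namespace LegGap

lemma int_arcsin : IntervalIntegrable (fun s : ℝ => (1 - s ^ 2) ^ (-(1/2) : ℝ)) volume (-1) 1 ∧
    ∫ s in (-1 : ℝ)..1, (1 - s ^ 2) ^ (-(1/2) : ℝ) = Real.pi := by
  have hder : ∀ s ∈ Set.Ioo (-1 : ℝ) 1,
      HasDerivAt Real.arcsin ((1 - s ^ 2) ^ (-(1/2) : ℝ)) s := by
    intro s hs
    have h := Real.hasDerivAt_arcsin (x := s) (by linarith [hs.1]) (by linarith [hs.2])
    have hp : 0 ≤ 1 - s ^ 2 := by nlinarith [hs.1, hs.2]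
    rw [Real.rpow_neg hp, ← Real.sqrt_eq_rpow, ← one_div]
    exact h
  have hi : IntervalIntegrable (fun s : ℝ => (1 - s ^ 2) ^ (-(1/2) : ℝ)) volume (-1) 1 := by
    rw [intervalIntegrable_iff_integrableOn_Ioc_of_le (by norm_num)]
    refine intervalIntegral.integrableOn_deriv_of_nonneg
      Real.continuous_arcsin.continuousOn hder ?_
    intro s hs
    have hp : 0 ≤ 1 - s ^ 2 := by nlinarith [hs.1, hs.2]
    positivity
  refine ⟨hi, ?_⟩
  rw [intervalIntegral.integral_eq_sub_of_hasDerivAt_of_le (by norm_num)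
    Real.continuous_arcsin.continuousOn hder hi]
  simp

lemma int_weight (a : ℝ) (ha : 1 / 2 ≤ a) :
    IntervalIntegrable (fun s : ℝ => (1 - s ^ 2) ^ (a - 1)) volume (-1) 1 := by
  have h1 : IntervalIntegrable (fun s : ℝ => (1 - s ^ 2) ^ (-(1/2) : ℝ) * (1 - s ^ 2) ^ (a - 1/2))
      volume (-1) 1 := by
    refine int_arcsin.1.mul_continuousOn ?_
    refine ContinuousOn.rpow_const (by fun_prop) ?_
    intro s _
    right; linarith
  rw [intervalIntegrable_iff_integrableOn_Ioo_of_le (by norm_num)] at h1 ⊢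
  refine h1.congr_fun ?_ measurableSet_Ioo
  intro s hs
  have hp : 0 < 1 - s ^ 2 := by nlinarith [hs.1, hs.2]
  simp only
  rw [← Real.rpow_add hp]
  congr 1; ring

lemma weight_split (a s : ℝ) (hs : s ∈ Set.Ioo (-1 : ℝ) 1) :
    (1 - s ^ 2) ^ a = (1 - s ^ 2) * (1 - s ^ 2) ^ (a - 1) := by
  have hp : 0 < 1 - s ^ 2 := by nlinarith [hs.1, hs.2]
  rw [Real.rpow_sub_one hp.ne']
  field_simp

/-- fundamental theorem of calculus for `g * ρ^a`. -/
lemma ftc (a : ℝ) (ha : 1 / 2 ≤ a) (g g' : ℝ → ℝ) (hg : ∀ s, HasDerivAt g (g' s) s)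
    (hg' : Continuous g') :
    ∫ s in (-1 : ℝ)..1, (g' s * (1 - s ^ 2) - 2 * a * s * g s) * (1 - s ^ 2) ^ (a - 1) = 0 := by
  have hgc : Continuous g := continuous_iff_continuousAt.2 fun s => (hg s).continuousAt
  have hder : ∀ s ∈ Set.Ioo (-1 : ℝ) 1,
      HasDerivAt (fun s => g s * (1 - s ^ 2) ^ a)
        ((g' s * (1 - s ^ 2) - 2 * a * s * g s) * (1 - s ^ 2) ^ (a - 1)) s := by
    intro s hs
    have hp : 0 < 1 - s ^ 2 := by nlinarith [hs.1, hs.2]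
    have h1 : HasDerivAt (fun s : ℝ => 1 - s ^ 2) (-(2 * s)) s := by
      simpa using ((hasDerivAt_id s).pow 2).const_sub 1
    have h2 := h1.rpow_const (p := a) (Or.inl hp.ne')
    have h3 := (hg s).mul h2
    refine h3.congr_deriv ?_
    rw [weight_split a s hs]
    ring
  have hi : IntervalIntegrable (fun s : ℝ => (g' s * (1 - s ^ 2) - 2 * a * s * g s) *
      (1 - s ^ 2) ^ (a - 1)) volume (-1) 1 :=
    (int_weight a ha).continuousOn_mul (by fun_prop)
  rw [intervalIntegral.integral_eq_sub_of_hasDerivAt_of_le (by norm_num) ?_ hder hi]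
  · have : a ≠ 0 := by linarith
    simp [Real.zero_rpow this]
  · refine hgc.continuousOn.mul (ContinuousOn.rpow_const (by fun_prop) ?_)
    intro s _
    right; linarith

noncomputable def R (a : ℝ) : ℝ := ∫ s in (-1 : ℝ)..1, (1 - s ^ 2) ^ (a - 1)

lemma int_congr {f g : ℝ → ℝ} (h : ∀ s ∈ Set.Ioo (-1 : ℝ) 1, f s = g s) :
    ∫ s in (-1 : ℝ)..1, f s = ∫ s in (-1 : ℝ)..1, g s := by
  rw [intervalIntegral.integral_of_le (by norm_num), intervalIntegral.integral_of_le (by norm_num),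
    integral_Ioc_eq_integral_Ioo, integral_Ioc_eq_integral_Ioo]
  exact setIntegral_congr_fun measurableSet_Ioo h

lemma int_weight' (a : ℝ) (ha : 1 / 2 ≤ a) :
    IntervalIntegrable (fun s : ℝ => (1 - s ^ 2) ^ a) volume (-1) 1 := by
  simpa using int_weight (a + 1) (by linarith)

lemma R_rec (a : ℝ) (ha : 1 / 2 ≤ a) : (2 * a + 1) * R (a + 1) = 2 * a * R a := by
  have h := ftc a ha (fun s => s) (fun _ => 1) (fun s => hasDerivAt_id s) continuous_const
  have e : ∫ s in (-1 : ℝ)..1, ((1:ℝ) * (1 - s ^ 2) - 2 * a * s * s) * (1 - s ^ 2) ^ (a - 1)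
      = ∫ s in (-1 : ℝ)..1, ((2 * a + 1) * (1 - s ^ 2) ^ a - 2 * a * (1 - s ^ 2) ^ (a - 1)) := by
    apply int_congr
    intro s hs
    rw [weight_split a s hs]; ring
  rw [e, intervalIntegral.integral_sub ((int_weight' a ha).const_mul _)
    ((int_weight a ha).const_mul _), intervalIntegral.integral_const_mul,
    intervalIntegral.integral_const_mul] at h
  unfold R
  simp only [add_sub_cancel_right]
  linarith

noncomputable def C (a : ℝ) : ℝ := Real.Gamma (a + 1/2) / (Real.sqrt Real.pi * Real.Gamma a)

lemma C_rec (a : ℝ) (ha : 1 / 2 ≤ a) : 2 * a * C (a + 1) = (2 * a + 1) * C a := by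
  unfold C
  have h0 : a ≠ 0 := by linarith
  have h1 : Real.Gamma a ≠ 0 := (Real.Gamma_pos_of_pos (by linarith)).ne'
  have h2 : Real.sqrt Real.pi ≠ 0 := (Real.sqrt_pos.2 Real.pi_pos).ne'
  rw [show a + 1 + 1 / 2 = (a + 1/2) + 1 by ring, Real.Gamma_add_one (by linarith : a + 1/2 ≠ 0),
    Real.Gamma_add_one h0]
  field_simp

lemma CR_step (a : ℝ) (ha : 1 / 2 ≤ a) (h : C a * R a = 1) : C (a + 1) * R (a + 1) = 1 := by
  have h1 := R_rec a ha
  have h2 := C_rec a ha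
  have h3 : (2 * a * (2 * a + 1)) * (C (a + 1) * R (a + 1)) = (2 * a * (2 * a + 1)) * 1 := by
    linear_combination (2 * a * C (a+1)) * h1 + (2 * a * R a) * h2 + 2 * a * (2 * a + 1) * h
  exact mul_left_cancel₀ (by nlinarith) h3

lemma CR_half : C (1/2) * R (1/2) = 1 := by
  unfold C R
  rw [show (1/2 : ℝ) - 1 = -(1/2) by norm_num, int_arcsin.2]
  rw [show (1/2 : ℝ) + 1/2 = 1 by norm_num, Real.Gamma_one, Real.Gamma_one_half_eq,
    Real.mul_self_sqrt Real.pi_pos.le]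
  field_simp

lemma CR_one : C 1 * R 1 = 1 := by
  unfold C R
  have h2 : Real.sqrt Real.pi ≠ 0 := (Real.sqrt_pos.2 Real.pi_pos).ne'
  rw [show (1 : ℝ) + 1/2 = 1/2 + 1 by norm_num, Real.Gamma_add_one (by norm_num),
    Real.Gamma_one_half_eq, Real.Gamma_one]
  simp
  field_simp
  norm_num

lemma CR (n : ℕ) : C (((n : ℝ) + 1) / 2) * R (((n : ℝ) + 1) / 2) = 1 := by
  induction n using Nat.twoStepInduction with
  | zero => simpa using CR_half
  | one => simpa using CR_one
  | more n ih _ =>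
    have := CR_step _ (by have : (0:ℝ) ≤ n := n.cast_nonneg
                          linarith) ih
    convert this using 3 <;> push_cast <;> ring

lemma omega_ratio (d : ℕ) (hd : 3 ≤ d) :
    omegaConst ((d : ℝ) - 3) / omegaConst ((d : ℝ) - 2) = C (((d : ℝ) - 2) / 2) := by
  have hd' : (3 : ℝ) ≤ d := by exact_mod_cast hd
  unfold omegaConst C
  rw [show ((d : ℝ) - 3 + 1) / 2 = ((d : ℝ) - 2) / 2 by ring,
    show ((d : ℝ) - 2 + 1) / 2 = ((d : ℝ) - 2) / 2 + 1 / 2 by ring,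
    Real.rpow_add Real.pi_pos, ← Real.sqrt_eq_rpow]
  have h1 : Real.Gamma (((d : ℝ) - 2) / 2) ≠ 0 := (Real.Gamma_pos_of_pos (by linarith)).ne'
  have h3 : Real.Gamma (((d : ℝ) - 2) / 2 + 1/2) ≠ 0 := (Real.Gamma_pos_of_pos (by linarith)).ne'
  have h2 : Real.sqrt Real.pi ≠ 0 := (Real.sqrt_pos.2 Real.pi_pos).ne'
  have h4 : Real.pi ^ (((d : ℝ) - 2) / 2) ≠ 0 := (Real.rpow_pos_of_pos Real.pi_pos _).ne'
  field_simp

noncomputable def z (x w s : ℝ) : ℂ := (x : ℂ) + Complex.I * (s : ℂ) * (w : ℂ)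

lemma z_cont (x w : ℝ) : Continuous (z x w) := by unfold z; fun_prop

lemma z_deriv (x w s : ℝ) : HasDerivAt (z x w) (Complex.I * w) s := by
  have h := ((((Complex.ofRealCLM.hasDerivAt (x := s)).const_mul Complex.I).mul_const
    (w : ℂ)).const_add (x : ℂ))
  refine HasDerivAt.congr_deriv (f' := Complex.I * 1 * (w : ℂ)) ?_ (by ring)
  change HasDerivAt (fun t : ℝ => (x : ℂ) + Complex.I * (t : ℂ) * (w : ℂ)) _ s
  simpa only [Complex.ofRealCLM_apply, Complex.ofReal_one] using h

lemma key (a : ℝ) (ha : 1 / 2 ≤ a) (n : ℕ) (x w : ℝ) (hw : w ^ 2 = 1 - x ^ 2) :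
    a * ((∫ s in (-1 : ℝ)..1, (z x w s ^ n).re * (1 - s ^ 2) ^ (a - 1)) -
      ∫ s in (-1 : ℝ)..1, (z x w s ^ (n + 2)).re * (1 - s ^ 2) ^ (a - 1)) =
    (a + n + 1) * w ^ 2 * ∫ s in (-1 : ℝ)..1, (z x w s ^ n).re * (1 - s ^ 2) ^ a := by
  have hz := z_cont x w
  have hc : ∀ m, Continuous fun s => (z x w s ^ m).re := fun m =>
    Complex.continuous_re.comp (hz.pow m)
  have hg : ∀ s, HasDerivAt (fun s => (Complex.I * w * z x w s ^ (n + 1)).re)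
      ((Complex.I * w * ((n + 1) * z x w s ^ n * (Complex.I * w))).re) s := by
    intro s
    have h := ((z_deriv x w s).pow (n + 1)).const_mul (Complex.I * w)
    have h' := Complex.reCLM.hasFDerivAt.comp_hasDerivAt s h
    simpa [Function.comp_def] using h'
  have h := ftc a ha _ _ hg (Complex.continuous_re.comp (by fun_prop))
  have e : ∫ s in (-1 : ℝ)..1, ((Complex.I * w * ((n + 1) * z x w s ^ n * (Complex.I * w))).re
        * (1 - s ^ 2) - 2 * a * s * (Complex.I * w * z x w s ^ (n + 1)).re)
        * (1 - s ^ 2) ^ (a - 1)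
      = ∫ s in (-1 : ℝ)..1, ((a * ((z x w s ^ n).re * (1 - s ^ 2) ^ (a - 1)) -
        a * ((z x w s ^ (n + 2)).re * (1 - s ^ 2) ^ (a - 1))) -
        ((a + n + 1) * w ^ 2) * ((z x w s ^ n).re * (1 - s ^ 2) ^ a)) := by
    apply int_congr
    intro s hs
    rw [weight_split a s hs]
    have hw' : (w : ℂ) ^ 2 = 1 - (x : ℂ) ^ 2 := by exact_mod_cast hw
    have hcx : Complex.I * w * ((n + 1) * z x w s ^ n * (Complex.I * w)) * ((1 - s ^ 2 : ℝ) : ℂ)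
        - ((2 * a * s : ℝ) : ℂ) * (Complex.I * w * z x w s ^ (n + 1)) =
        (a : ℂ) * z x w s ^ n - (a : ℂ) * z x w s ^ (n + 2)
          - (((a + n + 1) * w ^ 2 * (1 - s ^ 2) : ℝ) : ℂ) * z x w s ^ n := by
      push_cast
      rw [pow_succ (z x w s) n, pow_add (z x w s) n 2]
      generalize z x w s ^ n = q
      unfold z
      have hI : Complex.I ^ 2 = -1 := Complex.I_sq
      linear_combination (q * ((n + 1) * w ^ 2 * (1 - s ^ 2) - a * s ^ 2 * w ^ 2)) * hI
        + a * q * hw'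
    have hre := congrArg Complex.re hcx
    simp only [Complex.sub_re, Complex.re_ofReal_mul, Complex.re_mul_ofReal] at hre
    rw [hre]
    ring
  have i1 : ∀ m, IntervalIntegrable (fun s => (z x w s ^ m).re * (1 - s ^ 2) ^ (a - 1))
      volume (-1) 1 := fun m => (int_weight a ha).continuousOn_mul (hc m).continuousOn
  have i2 : IntervalIntegrable (fun s => (z x w s ^ n).re * (1 - s ^ 2) ^ a)
      volume (-1) 1 := (int_weight' a ha).continuousOn_mul (hc n).continuousOn
  rw [e, intervalIntegral.integral_sub (((i1 _).const_mul _).sub ((i1 _).const_mul _))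
    (i2.const_mul _), intervalIntegral.integral_sub ((i1 _).const_mul _) ((i1 _).const_mul _),
    intervalIntegral.integral_const_mul, intervalIntegral.integral_const_mul,
    intervalIntegral.integral_const_mul] at h
  linarith

lemma J_le (a : ℝ) (ha : 1 / 2 ≤ a) (n : ℕ) (x w : ℝ) (hw : w ^ 2 = 1 - x ^ 2) :
    ∫ s in (-1 : ℝ)..1, (z x w s ^ n).re * (1 - s ^ 2) ^ a ≤ R (a + 1) := by
  unfold R
  simp only [add_sub_cancel_right]
  have hc : Continuous fun s => (z x w s ^ n).re :=
    Complex.continuous_re.comp ((z_cont x w).pow n)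
  refine intervalIntegral.integral_mono_on (by norm_num)
    ((int_weight' a ha).continuousOn_mul hc.continuousOn) (int_weight' a ha) ?_
  intro s hs
  have hp : 0 ≤ 1 - s ^ 2 := by nlinarith [hs.1, hs.2]
  have hn : ‖z x w s‖ ≤ 1 := by
    rw [← sq_le_one_iff₀ (norm_nonneg _), Complex.sq_norm, Complex.normSq_apply]
    simp [z]
    nlinarith [mul_nonneg (sq_nonneg w) hp]
  have h1 : (z x w s ^ n).re ≤ 1 := by
    refine (Complex.re_le_norm _).trans ?_
    rw [norm_pow]
    exact pow_le_one₀ (norm_nonneg _) hn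
  have := Real.rpow_nonneg hp a
  nlinarith

end LegGap

open LegGap in
theorem legendre_gap_explicit_bound
    (d ℓ : ℕ) (hd : 3 ≤ d) (hℓ : 1 ≤ ℓ) (x : ℝ) (hx : x ∈ Set.Icc (-1 : ℝ) 1) :
    legendreP d (2 * ℓ) x - legendreP d (2 * ℓ + 2) x ≤
      ((4 * (ℓ : ℝ) + (d : ℝ)) / ((d : ℝ) - 1)) * (1 - x ^ 2) := by
  have hd' : (3 : ℝ) ≤ d := by exact_mod_cast hd
  have hl : (0 : ℝ) ≤ ℓ := ℓ.cast_nonneg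
  have hx2 : 0 ≤ 1 - x ^ 2 := by nlinarith [hx.1, hx.2]
  have hw : Real.sqrt (1 - x ^ 2) ^ 2 = 1 - x ^ 2 := Real.sq_sqrt hx2
  unfold legendreP
  rw [omega_ratio d hd, show ((d : ℝ) - 4) / 2 = ((d : ℝ) - 2) / 2 - 1 by ring]
  have hCR : C (((d : ℝ) - 2) / 2) * R (((d : ℝ) - 2) / 2) = 1 := by
    obtain ⟨m, rfl⟩ := Nat.exists_eq_add_of_le hd
    have := CR m
    convert this using 3 <;> push_cast <;> ring
  have hda : (d : ℝ) = 2 * (((d : ℝ) - 2) / 2) + 2 := by ring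
  have ha : 1 / 2 ≤ ((d : ℝ) - 2) / 2 := by linarith
  generalize ((d : ℝ) - 2) / 2 = a at *
  have hk := key a ha (2 * ℓ) x _ hw
  have hJ := J_le a ha (2 * ℓ) x _ hw
  have hR := R_rec a ha
  have hC : 0 < C a := by
    unfold C
    have h1 := Real.Gamma_pos_of_pos (show 0 < a by linarith)
    have h2 := Real.Gamma_pos_of_pos (show 0 < a + 1/2 by linarith)
    have := Real.pi_pos
    positivity
  simp only [z] at hk hJ
  rw [← mul_sub, hda, hw] at *
  push_cast at hk
  generalize (∫ s in (-1 : ℝ)..1, (((x : ℂ) + Complex.I * (s : ℂ) *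
    (Real.sqrt (1 - x ^ 2) : ℂ)) ^ (2 * ℓ)).re * (1 - s ^ 2) ^ a) = J at *
  generalize (∫ s in (-1 : ℝ)..1, (((x : ℂ) + Complex.I * (s : ℂ) *
    (Real.sqrt (1 - x ^ 2) : ℂ)) ^ (2 * ℓ)).re * (1 - s ^ 2) ^ (a - 1)) -
    (∫ s in (-1 : ℝ)..1, (((x : ℂ) + Complex.I * (s : ℂ) *
    (Real.sqrt (1 - x ^ 2) : ℂ)) ^ (2 * ℓ + 2)).re * (1 - s ^ 2) ^ (a - 1)) = D at *
  have ha0 : 0 < a := by linarith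
  rw [div_mul_eq_mul_div, le_div_iff₀ (by linarith)]
  have hDle : a * D ≤ (a + 2 * ℓ + 1) * (1 - x ^ 2) * R (a + 1) := by
    rw [hk]
    exact mul_le_mul_of_nonneg_left hJ (by positivity)
  have h5 := mul_le_mul_of_nonneg_left hDle (show 0 ≤ (2 * a + 1) * C a by positivity)
  have h6 : (2 * a + 1) * C a * ((a + 2 * ℓ + 1) * (1 - x ^ 2) * R (a + 1)) =
      a * ((4 * ℓ + (2 * a + 2)) * (1 - x ^ 2)) := by
    linear_combination (C a * (a + 2 * ℓ + 1) * (1 - x ^ 2)) * hR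
      + 2 * a * (a + 2 * ℓ + 1) * (1 - x ^ 2) * hCR
  rw [h6] at h5
  refine le_of_mul_le_mul_left ?_ ha0
  linarith
end

section
/- Let d ≥ 3 and ℓ ≥ 1 be integers. For all x ∈ [−1,1], the d-dimensional Legendre polynomials satisfy 1 − P_{2ℓ}(x) ≤ (λ_{2ℓ}/λ_2) · (1 − P_2(x)), where λ_k = k(k + d − 2). -/
open MeasureTheory

/-- |Im z^n| ≤ n |Im z| on the unit disc. -/
lemma abs_im_pow_le (z : ℂ) (hz : ‖z‖ ≤ 1) (n : ℕ) : |(z ^ n).im| ≤ n * |z.im| := by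
  induction n with
  | zero => simp
  | succ k ih =>
    rw [pow_succ, Complex.mul_im]
    have h1 : |(z ^ k).re| ≤ 1 :=
      (Complex.abs_re_le_norm _).trans (by rw [norm_pow]; exact pow_le_one₀ (norm_nonneg _) hz)
    have h2 : |z.re| ≤ 1 := (Complex.abs_re_le_norm _).trans hz
    refine (abs_add_le _ _).trans ?_
    rw [abs_mul, abs_mul]
    push_cast
    nlinarith [mul_le_mul_of_nonneg_right h1 (abs_nonneg z.im),
      mul_le_mul_of_nonneg_left h2 (abs_nonneg (z ^ k).im)]

lemma pointwise_bound (z : ℂ) (hz : ‖z‖ ≤ 1) (n : ℕ) :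
    1 - n * (1 - ‖z‖ ^ 2) - 2 * n ^ 2 * z.im ^ 2 ≤ (z ^ (2 * n)).re := by
  have hre : (z ^ (2 * n)).re = (‖z‖ ^ 2) ^ n - 2 * (z ^ n).im ^ 2 := by
    have h : ((z ^ n).re * (z ^ n).re + (z ^ n).im * (z ^ n).im) = (‖z‖ ^ 2) ^ n := by
      rw [← Complex.normSq_apply, Complex.normSq_eq_norm_sq, norm_pow]; ring
    rw [mul_comm 2 n, pow_mul, pow_two, Complex.mul_re, ← h]; ring
  have hb : 1 + (n : ℝ) * (‖z‖ ^ 2 - 1) ≤ (1 + (‖z‖ ^ 2 - 1)) ^ n :=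
    one_add_mul_le_pow (by nlinarith [sq_nonneg ‖z‖]) n
  have hb2 : (1 + (‖z‖ ^ 2 - 1)) = ‖z‖ ^ 2 := by ring
  rw [hb2] at hb
  have hi : (z ^ n).im ^ 2 ≤ (n * |z.im|) ^ 2 := by
    rw [← sq_abs (z ^ n).im]
    exact pow_le_pow_left₀ (abs_nonneg _) (abs_im_pow_le z hz n) 2
  rw [mul_pow, sq_abs] at hi
  rw [hre]; nlinarith

lemma beta_integrand_ofReal (p : ℝ) :
    ∀ u ∈ Set.Icc (0 : ℝ) 1, (u : ℂ) ^ ((p : ℂ) - 1) * (1 - (u : ℂ)) ^ ((p : ℂ) - 1) =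
      ((u ^ (p - 1) * (1 - u) ^ (p - 1) : ℝ) : ℂ) := by
  intro u hu
  rw [Complex.ofReal_mul, Complex.ofReal_cpow hu.1, Complex.ofReal_cpow (by linarith [hu.2])]
  push_cast
  rfl

lemma beta_intervalIntegrable {p : ℝ} (hp : 0 < p) :
    IntervalIntegrable (fun u : ℝ => u ^ (p - 1) * (1 - u) ^ (p - 1)) volume 0 1 := by
  have h := Complex.betaIntegral_convergent (u := (p : ℂ)) (v := (p : ℂ)) (by simpa) (by simpa)
  rw [intervalIntegrable_iff] at h ⊢
  have hre : IntegrableOn (fun u : ℝ => RCLike.re ((u : ℂ) ^ ((p : ℂ) - 1) *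
      (1 - (u : ℂ)) ^ ((p : ℂ) - 1))) (Set.uIoc 0 1) volume := Integrable.re h
  refine hre.congr_fun ?_ measurableSet_uIoc
  intro u hu
  rw [Set.uIoc_of_le zero_le_one] at hu
  simp only
  rw [beta_integrand_ofReal p u ⟨hu.1.le, hu.2⟩]
  exact Complex.ofReal_re _

lemma beta_integral_eq {p : ℝ} (hp : 0 < p) :
    ∫ u in (0 : ℝ)..1, u ^ (p - 1) * (1 - u) ^ (p - 1) =
      Real.Gamma p * Real.Gamma p / Real.Gamma (p + p) := by
  have h := ProbabilityTheory.beta_eq_betaIntegralReal p p hp hp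
  rw [ProbabilityTheory.beta] at h
  rw [h, Complex.betaIntegral]
  rw [intervalIntegral.integral_congr (g := fun u : ℝ =>
    ((u ^ (p - 1) * (1 - u) ^ (p - 1) : ℝ) : ℂ))]
  · rw [intervalIntegral.integral_ofReal, Complex.ofReal_re]
  · intro u hu
    rw [Set.uIcc_of_le zero_le_one] at hu
    exact beta_integrand_ofReal p u hu

lemma weight_eq (p : ℝ) : ∀ s ∈ Set.Icc (-1 : ℝ) 1, (1 - s ^ 2) ^ (p - 1) = (4 : ℝ) ^ (p - 1) *
    ((1 / 2 * s + 1 / 2) ^ (p - 1) * (1 - (1 / 2 * s + 1 / 2)) ^ (p - 1)) := by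
  intro s hs
  rw [← Real.mul_rpow (by linarith [hs.1]) (by linarith [hs.2]),
    ← Real.mul_rpow (by norm_num)
      (mul_nonneg (by linarith [hs.1]) (by linarith [hs.2]))]
  congr 1; ring

lemma weight_integrable {p : ℝ} (hp : 0 < p) :
    IntervalIntegrable (fun s : ℝ => (1 - s ^ 2) ^ (p - 1)) volume (-1) 1 := by
  have h := ((beta_intervalIntegrable hp).comp_add_right (1 / 2)).comp_mul_left (c := 1 / 2)
  have h' := h.const_mul ((4 : ℝ) ^ (p - 1))
  norm_num at h'
  rw [intervalIntegrable_iff] at h' ⊢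
  refine h'.congr_fun ?_ measurableSet_uIoc
  intro s hs
  rw [Set.uIoc_of_le (by norm_num)] at hs
  simp only
  rw [weight_eq p s ⟨hs.1.le, hs.2⟩]

lemma weight_integral {p : ℝ} (hp : 0 < p) :
    ∫ s in (-1 : ℝ)..1, (1 - s ^ 2) ^ (p - 1) =
      √Real.pi * Real.Gamma p / Real.Gamma (p + 1 / 2) := by
  rw [intervalIntegral.integral_congr (g := fun s : ℝ => (4 : ℝ) ^ (p - 1) *
    ((1 / 2 * s + 1 / 2) ^ (p - 1) * (1 - (1 / 2 * s + 1 / 2)) ^ (p - 1)))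
    (by intro s hs; rw [Set.uIcc_of_le (by norm_num)] at hs; exact weight_eq p s hs)]
  rw [intervalIntegral.integral_const_mul,
    intervalIntegral.integral_comp_mul_add (fun u : ℝ => u ^ (p - 1) * (1 - u) ^ (p - 1))
      (by norm_num : (1 / 2 : ℝ) ≠ 0)]
  norm_num only
  rw [beta_integral_eq hp, smul_eq_mul]
  have hd := Real.Gamma_mul_Gamma_add_half p
  have hG1 := Real.Gamma_pos_of_pos hp
  have hG2 := Real.Gamma_pos_of_pos (show 0 < p + 1 / 2 by linarith)
  have hG3 := Real.Gamma_pos_of_pos (show 0 < p + p by linarith)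
  have h4 : (4 : ℝ) ^ (p - 1) * 2 * 2 ^ (1 - 2 * p) = 1 := by
    rw [show (4 : ℝ) = 2 ^ (2 : ℝ) by norm_num, ← Real.rpow_mul (by norm_num)]
    rw [← Real.rpow_add_one (by norm_num), ← Real.rpow_add (by norm_num),
      show 2 * (p - 1) + 1 + (1 - 2 * p) = 0 by ring, Real.rpow_zero]
  rw [← two_mul] at hG3 ⊢
  rw [eq_div_iff hG2.ne']
  field_simp
  calc _ = (4 : ℝ) ^ (p - 1) * 2 * (Real.Gamma p * Real.Gamma (p + 1 / 2)) := by
        ring_nf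
    _ = (4 ^ (p - 1) * 2 * 2 ^ (1 - 2 * p)) * Real.Gamma (2 * p) * √Real.pi := by
        rw [hd]; ring
    _ = _ := by rw [h4]; ring

lemma const_eq {p : ℝ} (hp : 0 < p) :
    omegaConst (2 * p - 1) / omegaConst (2 * p) * (√Real.pi * Real.Gamma p /
      Real.Gamma (p + 1 / 2)) = 1 := by
  have hG1 := Real.Gamma_pos_of_pos hp
  have hG2 := Real.Gamma_pos_of_pos (show 0 < p + 1 / 2 by linarith)
  unfold omegaConst
  rw [show (2 * p - 1 + 1) / 2 = p by ring, show (2 * p + 1) / 2 = p + 1 / 2 by ring,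
    Real.rpow_add Real.pi_pos, ← Real.sqrt_eq_rpow]
  have := Real.rpow_pos_of_pos Real.pi_pos p
  have := Real.sqrt_pos.2 Real.pi_pos
  field_simp

/-- Averages of quadratic polynomials against the normalized weight. -/
lemma quad_average {p : ℝ} (hp : 0 < p) (A B : ℝ) :
    omegaConst (2 * p - 1) / omegaConst (2 * p) *
      ∫ s in (-1 : ℝ)..1, (A + B * s ^ 2) * (1 - s ^ 2) ^ (p - 1) = A + B / (2 * p + 1) := by
  have hcong : ∫ s in (-1 : ℝ)..1, (A + B * s ^ 2) * (1 - s ^ 2) ^ (p - 1) =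
      ∫ s in (-1 : ℝ)..1, ((A + B) * (1 - s ^ 2) ^ (p - 1) - B * (1 - s ^ 2) ^ (p + 1 - 1)) := by
    apply intervalIntegral.integral_congr
    intro s hs
    rw [Set.uIcc_of_le (by norm_num)] at hs
    have h0 : 0 ≤ 1 - s ^ 2 := by nlinarith [hs.1, hs.2]
    have : (1 - s ^ 2) ^ (p + 1 - 1) = (1 - s ^ 2) ^ (p - 1) * (1 - s ^ 2) := by
      rw [show p + 1 - 1 = (p - 1) + 1 by ring, Real.rpow_add_one' h0 (by linarith)]
    simp only
    rw [this]; ring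
  have hp1 : 0 < p + 1 := by linarith
  rw [hcong, intervalIntegral.integral_sub ((weight_integrable hp).const_mul _)
    ((weight_integrable hp1).const_mul _), intervalIntegral.integral_const_mul,
    intervalIntegral.integral_const_mul, weight_integral hp, weight_integral hp1,
    Real.Gamma_add_one hp.ne', show p + 1 + 1 / 2 = (p + 1 / 2) + 1 by ring,
    Real.Gamma_add_one (by linarith : p + 1 / 2 ≠ 0)]
  have hc := const_eq hp
  have hG2 := (Real.Gamma_pos_of_pos (show 0 < p + 1 / 2 by linarith)).ne'
  have hq : p + 1 / 2 ≠ 0 := by linarith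
  have hq2 : 2 * p + 1 ≠ 0 := by linarith
  have e : √Real.pi * (p * Real.Gamma p) / ((p + 1 / 2) * Real.Gamma (p + 1 / 2)) =
      (√Real.pi * Real.Gamma p / Real.Gamma (p + 1 / 2)) * (p / (p + 1 / 2)) := by
    field_simp
  rw [e]
  generalize √Real.pi * Real.Gamma p / Real.Gamma (p + 1 / 2) = W at *
  generalize omegaConst (2 * p - 1) / omegaConst (2 * p) = c at *
  calc _ = (c * W) * ((A + B) - B * (p / (p + 1 / 2))) := by ring
    _ = _ := by rw [hc]; field_simp; ring

lemma omegaConst_pos {q : ℝ} (hq : 0 < q + 1) : 0 < omegaConst q := by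
  unfold omegaConst
  have := Real.Gamma_pos_of_pos (show 0 < (q + 1) / 2 by linarith)
  have := Real.pi_pos
  positivity

theorem legendre_imbert_silvestre_villani
    (d ℓ : ℕ) (hd : 3 ≤ d) (hℓ : 1 ≤ ℓ) (x : ℝ) (hx : x ∈ Set.Icc (-1 : ℝ) 1) :
    1 - legendreP d (2 * ℓ) x ≤
      (lambdaEig d (2 * ℓ) / lambdaEig d 2) * (1 - legendreP d 2 x) := by
  obtain ⟨p, hp⟩ : ∃ p : ℝ, p = ((d : ℝ) - 2) / 2 := ⟨_, rfl⟩
  have hd3 : (3 : ℝ) ≤ d := by exact_mod_cast hd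
  have hdp : (d : ℝ) = 2 * p + 2 := by linarith
  have hp0 : 0 < p := by linarith
  have ht : 0 ≤ 1 - x ^ 2 := by nlinarith [hx.1, hx.2]
  have hsq : √(1 - x ^ 2) ^ 2 = 1 - x ^ 2 := Real.sq_sqrt ht
  have hP2 : legendreP d 2 x = x ^ 2 + (-(1 - x ^ 2)) / (2 * p + 1) := by
    rw [← quad_average hp0, legendreP, hdp, show 2 * p + 2 - 3 = 2 * p - 1 by ring,
      show 2 * p + 2 - 2 = 2 * p by ring, show (2 * p + 2 - 4) / 2 = p - 1 by ring]
    congr 2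
    ext s
    congr 1
    simp only [pow_two ((x : ℂ) + _), Complex.mul_re, Complex.mul_im, Complex.add_re,
      Complex.add_im, Complex.I_re, Complex.I_im, Complex.ofReal_re, Complex.ofReal_im]
    linear_combination (-s ^ 2) * hsq
  have hPl : 1 - (1 - x ^ 2) * ℓ + (-(1 - x ^ 2) * (2 * ℓ ^ 2 - ℓ)) / (2 * p + 1) ≤
      legendreP d (2 * ℓ) x := by
    rw [← quad_average hp0, legendreP, hdp, show 2 * p + 2 - 3 = 2 * p - 1 by ring,
      show 2 * p + 2 - 2 = 2 * p by ring, show (2 * p + 2 - 4) / 2 = p - 1 by ring]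
    have hc : 0 ≤ omegaConst (2 * p - 1) / omegaConst (2 * p) :=
      (div_pos (omegaConst_pos (by linarith)) (omegaConst_pos (by linarith))).le
    refine mul_le_mul_of_nonneg_left ?_ hc
    refine intervalIntegral.integral_mono_on (by norm_num) ?_ ?_ ?_
    · exact (weight_integrable hp0).continuousOn_mul (by fun_prop)
    · refine (weight_integrable hp0).continuousOn_mul (Continuous.continuousOn ?_)
      exact Complex.continuous_re.comp (by fun_prop)
    · intro s hs
      have h0 : 0 ≤ 1 - s ^ 2 := by nlinarith [hs.1, hs.2]
      refine mul_le_mul_of_nonneg_right ?_ (Real.rpow_nonneg h0 _)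
      have him : ((x : ℂ) + Complex.I * (s : ℂ) * (√(1 - x ^ 2) : ℂ)).im = s * √(1 - x ^ 2) := by
        simp [Complex.mul_re, Complex.mul_im]
      have hre : ((x : ℂ) + Complex.I * (s : ℂ) * (√(1 - x ^ 2) : ℂ)).re = x := by
        simp [Complex.mul_re, Complex.mul_im]
      have hn : ‖(x : ℂ) + Complex.I * (s : ℂ) * (√(1 - x ^ 2) : ℂ)‖ ^ 2 =
          1 - (1 - s ^ 2) * (1 - x ^ 2) := by
        rw [← Complex.normSq_eq_norm_sq, Complex.normSq_apply, him, hre]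
        linear_combination (s ^ 2) * hsq
      have hn1 : ‖(x : ℂ) + Complex.I * (s : ℂ) * (√(1 - x ^ 2) : ℂ)‖ ≤ 1 := by
        have := mul_nonneg h0 ht
        exact (sq_le_one_iff₀ (norm_nonneg _)).1 (by rw [hn]; linarith)
      refine le_trans (le_of_eq ?_) (pointwise_bound _ hn1 ℓ)
      rw [hn, him, mul_pow, hsq]
      ring
  have hq2 : 2 * p + 1 ≠ 0 := by linarith
  have hr : lambdaEig d (2 * ℓ) / lambdaEig d 2 * (1 - legendreP d 2 x) =
      1 - (1 - (1 - x ^ 2) * ℓ + (-(1 - x ^ 2) * (2 * ℓ ^ 2 - ℓ)) / (2 * p + 1)) := by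
    rw [hP2, lambdaEig, lambdaEig, hdp]
    have hq3 : p + 1 ≠ 0 := by linarith
    push_cast
    rw [show (2 : ℝ) + (2 * p + 2) - 2 = 2 * (p + 1) by ring]
    field_simp
    ring
  rw [hr]
  linarith
end

section
/- For every integer ℓ ≥ 1 and all x, s ∈ [−1, 1], one has (Im((x + i s √(1−x²))^{ℓ+1}))² − (Im((x + i s √(1−x²))^{ℓ}))² ≤ (2ℓ + 1) s² (1 − x²). -/
theorem aux_sin (n : ℕ) (t : ℝ) : |Real.sin (n * t)| ≤ n * |Real.sin t| := by
  induction n with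
  | zero => simp
  | succ k ih =>
    have h : ((k + 1 : ℕ) : ℝ) * t = k * t + t := by push_cast; ring
    rw [h, Real.sin_add]
    have h1 := abs_add_le (Real.sin (k * t) * Real.cos t) (Real.cos (k * t) * Real.sin t)
    rw [abs_mul, abs_mul] at h1
    have h2 := mul_le_mul_of_nonneg_left (Real.abs_cos_le_one t) (abs_nonneg (Real.sin (k * t)))
    have h3 := mul_le_mul_of_nonneg_right (Real.abs_cos_le_one (k * t)) (abs_nonneg (Real.sin t))
    push_cast
    linarith

theorem aux_im (z : ℂ) (n : ℕ) : (z ^ n).im = ‖z‖ ^ n * Real.sin (n * z.arg) := by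
  conv_lhs => rw [← Complex.norm_mul_exp_arg_mul_I z]
  rw [mul_pow, ← Complex.exp_nat_mul, ← mul_assoc, ← Complex.ofReal_natCast,
    ← Complex.ofReal_mul, ← Complex.ofReal_pow, Complex.im_ofReal_mul, Complex.exp_ofReal_mul_I_im]

theorem aux_gap (z : ℂ) (hz : ‖z‖ ≤ 1) (l : ℕ) (hl : 1 ≤ l) :
    (z ^ (l + 1)).im ^ 2 - (z ^ l).im ^ 2 ≤ (2 * (l : ℝ) + 1) * z.im ^ 2 := by
  have h1 := aux_im z 1
  rw [pow_one, pow_one, Nat.cast_one, one_mul] at h1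
  rw [aux_im, aux_im, h1]
  set r := ‖z‖
  set t := z.arg
  have hr : 0 ≤ r := norm_nonneg z
  have key : Real.sin ((l + 1 : ℕ) * t) ^ 2 - Real.sin (l * t) ^ 2
      ≤ (2 * (l : ℝ) + 1) * Real.sin t ^ 2 := by
    have e : Real.sin ((l + 1 : ℕ) * t) ^ 2 - Real.sin (l * t) ^ 2
        = Real.sin ((2 * l + 1 : ℕ) * t) * Real.sin t := by
      have a : ((l + 1 : ℕ) : ℝ) * t = l * t + t := by push_cast; ring
      have b : ((2 * l + 1 : ℕ) : ℝ) * t = l * t + (l * t + t) := by push_cast; ring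
      rw [a, b, Real.sin_add (l * t) (l * t + t), Real.sin_add, Real.cos_add]
      have c1 := Real.sin_sq_add_cos_sq t
      have c2 := Real.sin_sq_add_cos_sq (l * t)
      linear_combination Real.sin (l * t) ^ 2 * c1
    rw [e]
    have := aux_sin (2 * l + 1) t
    calc _ ≤ |Real.sin ((2 * l + 1 : ℕ) * t) * Real.sin t| := le_abs_self _
      _ = |Real.sin ((2 * l + 1 : ℕ) * t)| * |Real.sin t| := abs_mul _ _
      _ ≤ ((2 * l + 1 : ℕ) * |Real.sin t|) * |Real.sin t| := by gcongr
      _ = _ := by rw [mul_assoc, abs_mul_abs_self]; push_cast; ring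
  have p1 : (r ^ (l + 1)) ^ 2 ≤ (r ^ l) ^ 2 := by
    have := pow_le_pow_of_le_one hr hz (Nat.le_succ l)
    gcongr
  have p2 : (r ^ l) ^ 2 ≤ r ^ 2 := by
    have := pow_le_of_le_one hr hz (by omega : l ≠ 0)
    gcongr
  calc _ = (r ^ (l + 1)) ^ 2 * Real.sin ((l + 1 : ℕ) * t) ^ 2
          - (r ^ l) ^ 2 * Real.sin (l * t) ^ 2 := by ring
    _ ≤ (r ^ l) ^ 2 * Real.sin ((l + 1 : ℕ) * t) ^ 2
          - (r ^ l) ^ 2 * Real.sin (l * t) ^ 2 := by gcongr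
    _ = (r ^ l) ^ 2 * (Real.sin ((l + 1 : ℕ) * t) ^ 2 - Real.sin (l * t) ^ 2) := by ring
    _ ≤ (r ^ l) ^ 2 * ((2 * (l : ℝ) + 1) * Real.sin t ^ 2) := by gcongr
    _ ≤ r ^ 2 * ((2 * (l : ℝ) + 1) * Real.sin t ^ 2) := by gcongr
    _ = _ := by ring


theorem im_pow_sq_gap (ℓ : ℕ) (hℓ : 1 ≤ ℓ) (x s : ℝ)
    (hx : x ∈ Set.Icc (-1 : ℝ) 1) (hs : s ∈ Set.Icc (-1 : ℝ) 1) :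
    ((((x : ℂ) + Complex.I * (s : ℂ) * (Real.sqrt (1 - x ^ 2) : ℂ)) ^ (ℓ + 1)).im) ^ 2 -
      ((((x : ℂ) + Complex.I * (s : ℂ) * (Real.sqrt (1 - x ^ 2) : ℂ)) ^ ℓ).im) ^ 2 ≤
      (2 * (ℓ : ℝ) + 1) * s ^ 2 * (1 - x ^ 2) := by

  obtain ⟨hx1, hx2⟩ := hx
  obtain ⟨hs1, hs2⟩ := hs
  have hq : 0 ≤ 1 - x ^ 2 := by nlinarith
  have hss : s ^ 2 ≤ 1 := by nlinarith
  have hsq := Real.sq_sqrt hq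
  set w := Real.sqrt (1 - x ^ 2)
  set z : ℂ := (x : ℂ) + Complex.I * (s : ℂ) * (w : ℂ) with hzdef
  have hre : z.re = x := by simp [hzdef]
  have him : z.im = s * w := by simp [hzdef]
  have hz : ‖z‖ ≤ 1 := by
    have h := Complex.sq_norm z
    rw [Complex.normSq_apply, hre, him] at h
    have h2 : ‖z‖ ^ 2 ≤ 1 := by nlinarith
    exact (sq_le_one_iff₀ (norm_nonneg z)).1 h2
  have h := aux_gap z hz ℓ hℓ
  rw [him, mul_pow, hsq, ← mul_assoc] at h
  exact h
end

section
/- Let ℓ ≥ 1 be an integer and let x, s ∈ [−1, 1]. Define F(s, x) = Re((x + i s √(1−x²))^{2ℓ} − (x + i s √(1−x²))^{2(ℓ+1)}). Then F(s, x) ≤ (4ℓ + 2) s² (1 − x²) + (x² + s²(1 − x²))^{ℓ} (1 − x² − s²(1 − x²)). -/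
theorem im_pow_aux (z : ℂ) (hz : Complex.normSq z ≤ 1) (n : ℕ) :
    |(z ^ n).im| ≤ n * |z.im| := by
  have hN : ‖z‖ ≤ 1 := by
    rw [Complex.normSq_eq_norm_sq] at hz
    nlinarith [norm_nonneg z]
  induction n with
  | zero => simp
  | succ k ih =>
    have ha : |(z ^ k).re| ≤ 1 := (Complex.abs_re_le_norm _).trans (by
      rw [norm_pow]; exact pow_le_one₀ (norm_nonneg _) hN)
    have hx : |z.re| ≤ 1 := (Complex.abs_re_le_norm _).trans hN
    rw [pow_succ, Complex.mul_im]
    refine (abs_add_le _ _).trans ?_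
    rw [abs_mul, abs_mul]
    push_cast
    have h1 := mul_le_mul_of_nonneg_right ha (abs_nonneg z.im)
    have h2 := mul_le_mul_of_nonneg_left hx (abs_nonneg (z ^ k).im)
    linarith

theorem main_aux (z : ℂ) (hz : Complex.normSq z ≤ 1) (n : ℕ) :
    (z ^ (2 * n) - z ^ (2 * (n + 1))).re ≤ (4 * (n : ℝ) + 2) * z.im ^ 2 +
      Complex.normSq z ^ n * (1 - Complex.normSq z) := by
  have key : ∀ m : ℕ, (z ^ (2 * m)).re = Complex.normSq z ^ m - 2 * (z ^ m).im ^ 2 := by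
    intro m
    rw [← map_pow, Complex.normSq_apply, mul_comm 2 m, pow_mul, sq (z ^ m), Complex.mul_re]
    ring
  have hN : ‖z‖ ≤ 1 := by
    rw [Complex.normSq_eq_norm_sq] at hz
    nlinarith [norm_nonneg z]
  have ha : |(z ^ n).re| ≤ 1 := (Complex.abs_re_le_norm _).trans (by
      rw [norm_pow]; exact pow_le_one₀ (norm_nonneg _) hN)
  have hx : |z.re| ≤ 1 := (Complex.abs_re_le_norm _).trans hN
  have hb := im_pow_aux z hz n
  rw [Complex.sub_re, key, key, pow_succ z n, Complex.mul_im]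
  rw [Complex.normSq_apply] at hz
  generalize (z ^ n).re = a at *
  generalize (z ^ n).im = b at *
  have ha2 : a ^ 2 ≤ 1 := (sq_le_one_iff_abs_le_one a).2 ha
  have h1 : a ^ 2 * z.im ^ 2 ≤ z.im ^ 2 := by nlinarith [sq_nonneg z.im]
  have h2 : b ^ 2 * z.re ^ 2 ≤ b ^ 2 := by nlinarith [sq_nonneg b, sq_nonneg z.im]
  have h3 : (a * z.re) * (b * z.im) ≤ n * z.im ^ 2 := by
    refine (le_abs_self _).trans ?_
    rw [abs_mul]
    have : |a * z.re| ≤ 1 := by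
      rw [abs_mul]; exact mul_le_one₀ ha (abs_nonneg _) hx
    have h5 : |b * z.im| ≤ n * z.im ^ 2 := by
      rw [abs_mul, ← sq_abs z.im]
      nlinarith [abs_nonneg z.im]
    nlinarith [abs_nonneg (b * z.im)]
  rw [pow_succ (Complex.normSq z)]
  nlinarith

theorem re_pow_diff_bound (ℓ : ℕ) (hℓ : 1 ≤ ℓ) (x s : ℝ)
    (hx : x ∈ Set.Icc (-1 : ℝ) 1) (hs : s ∈ Set.Icc (-1 : ℝ) 1) :
    ((((x : ℂ) + Complex.I * (s : ℂ) * (Real.sqrt (1 - x ^ 2) : ℂ)) ^ (2 * ℓ) -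
        ((x : ℂ) + Complex.I * (s : ℂ) * (Real.sqrt (1 - x ^ 2) : ℂ)) ^ (2 * (ℓ + 1))).re) ≤
      (4 * (ℓ : ℝ) + 2) * s ^ 2 * (1 - x ^ 2) +
        (x ^ 2 + s ^ 2 * (1 - x ^ 2)) ^ ℓ * (1 - x ^ 2 - s ^ 2 * (1 - x ^ 2)) := by
  obtain ⟨hx1, hx2⟩ := hx
  obtain ⟨hs1, hs2⟩ := hs
  have h0 : 0 ≤ 1 - x ^ 2 := by nlinarith
  have hs0 : s ^ 2 ≤ 1 := by nlinarith
  have hq := Real.sq_sqrt h0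
  have him : ((x : ℂ) + Complex.I * (s : ℂ) * (Real.sqrt (1 - x ^ 2) : ℂ)).im
      = s * Real.sqrt (1 - x ^ 2) := by simp
  have hre : ((x : ℂ) + Complex.I * (s : ℂ) * (Real.sqrt (1 - x ^ 2) : ℂ)).re = x := by simp
  have hn : Complex.normSq ((x : ℂ) + Complex.I * (s : ℂ) * (Real.sqrt (1 - x ^ 2) : ℂ))
      = x ^ 2 + s ^ 2 * (1 - x ^ 2) := by
    rw [Complex.normSq_apply, him, hre]
    linear_combination s ^ 2 * hq
  have h := main_aux _ (by rw [hn]; nlinarith) ℓ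
  rw [hn, him, mul_pow, hq] at h
  refine h.trans (le_of_eq ?_)
  ring
end
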